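/- Let R be a Gorenstein local ring of Krull dimension zero with maximal ideal 𝔪 and residue field k, and let M be a finitely generated R-module. Then M is free if and only if ℓ_R(M) ≤ ℓ_R(R[𝔪]·M)·ℓ_R(R). -/

import Mathlib

/-!
The proof has two ingredients.

*The socle of `R` is principal.* Fix `0 ≠ s ∈ R[𝔪]`; then `k ≅ sR ⊆ R`. If `Ext^(i+1)(-, R)`
vanishes on finitely generated modules and `i ≥ 1`, the long exact sequence of `0 → k → R → R/sR → 0`
gives `Ext^i(k, R) = 0`, and since all finitely generated modules are iterated extensions of copies
of `k`, `Ext^i(-, R)` vanishes on them too (`ExtVanishes.descend`). Starting from finite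
self-injective dimension one reaches `Ext^1(R/sR, R) = 0`, so every map `sR → R` extends to `R`; for
`t ∈ R[𝔪]` the map `s ↦ t` is then multiplication by some `c`, i.e. `t = cs` (`socle_le_span`).

*Comparison of lengths.* With `R[𝔪] = sR`, the module `R[𝔪]·M = sM` is a `k`-vector space, of
dimension `r` say. Lifting a basis along `s : M → sM` gives an injection `R^r → M`
(`exists_injective_of_socle_eq_span`), because its kernel meets the socle of `R^r` trivially. If
`ℓ(M) ≤ r·ℓ(R) = ℓ(R^r)`, this injection is an isomorphism. Conversely, `R[𝔪]·R^n = R[𝔪]^n` has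
length at least `n` because `R[𝔪] ≠ 0`, which gives the inequality when `M` is free.
-/

open IsLocalRing CategoryTheory

noncomputable section

/-- The length of a module, defined as the Krull dimension of its lattice of submodules. -/
noncomputable def mLength (R M : Type) [Ring R] [AddCommGroup M] [Module R M] :
    WithBot ℕ∞ :=
  Order.krullDim (Submodule R M)

/-- The depth of a module over a local ring: the supremum of the lengths of
regular sequences on `M` consisting of elements of the maximal ideal. -/
noncomputable def mDepth (A : Type) [CommRing A] [IsLocalRing A]
    (M : Type) [AddCommGroup M] [Module A M] : ℕ∞ :=
  sSup {n : ℕ∞ | ∃ rs : List A, (rs.length : ℕ∞) = n ∧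
    (∀ x ∈ rs, x ∈ maximalIdeal A) ∧ RingTheory.Sequence.IsRegular M rs}

/-- The `𝒪`-module structure on an `A`-module killed by `ker lam`,
obtained through the isomorphism `A ⧸ ker lam ≃ 𝒪`. -/
noncomputable def oModule {𝒪 A : Type} [CommRing 𝒪] [CommRing A] (lam : A →+* 𝒪)
    (hs : Function.Surjective lam) (M : Type) [AddCommGroup M] [Module A M]
    (h : Module.IsTorsionBySet A M (RingHom.ker lam : Set A)) : Module 𝒪 M :=
  letI := h.module
  Module.compHom M (RingHom.quotientKerEquivOfSurjective hs).symm.toRingHom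

/-- The length over `𝒪` of an `A`-module killed by `ker lam`. -/
noncomputable def oLength {𝒪 A : Type} [CommRing 𝒪] [CommRing A] (lam : A →+* 𝒪)
    (hs : Function.Surjective lam) (M : Type) [AddCommGroup M] [Module A M]
    (h : Module.IsTorsionBySet A M (RingHom.ker lam : Set A)) : WithBot ℕ∞ :=
  letI := oModule lam hs M h
  mLength 𝒪 M

/-- `M` has finite length as an `𝒪`-module. -/
def OFiniteLength {𝒪 A : Type} [CommRing 𝒪] [CommRing A] (lam : A →+* 𝒪)
    (hs : Function.Surjective lam) (M : Type) [AddCommGroup M] [Module A M]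
    (h : Module.IsTorsionBySet A M (RingHom.ker lam : Set A)) : Prop :=
  letI := oModule lam hs M h
  IsFiniteLength 𝒪 M

/-- The rank over `𝒪` of an `A`-module killed by `ker lam`: the dimension over the
fraction field `K` of `𝒪` of the base change `K ⊗_𝒪 M`. -/
noncomputable def oRank {𝒪 A : Type} [CommRing 𝒪] [IsDomain 𝒪] [CommRing A] (lam : A →+* 𝒪)
    (hs : Function.Surjective lam) (M : Type) [AddCommGroup M] [Module A M]
    (h : Module.IsTorsionBySet A M (RingHom.ker lam : Set A)) : Cardinal :=
  letI := oModule lam hs M h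
  Module.rank (FractionRing 𝒪) (TensorProduct 𝒪 (FractionRing 𝒪) M)

lemma torsionBySet_torsion {A M : Type} [CommRing A] [AddCommGroup M] [Module A M]
    (s : Set A) : Module.IsTorsionBySet A (Submodule.torsionBySet A M s) s :=
  Submodule.torsionBySet_isTorsionBySet s

/-- The annihilator `A[J]` of an ideal `J` is killed by `J`. -/
lemma annihilator_torsion {A : Type} [CommRing A] (J : Ideal A) :
    Module.IsTorsionBySet A (Submodule.annihilator J) (J : Set A) := by
  rintro ⟨x, hx⟩ ⟨a, ha⟩
  apply Subtype.ext
  have := (Submodule.mem_annihilator.mp hx) a ha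
  simpa [smul_eq_mul, mul_comm] using this

lemma submodule_torsion {A M : Type} [CommRing A] [AddCommGroup M] [Module A M] {s : Set A}
    (h : Module.IsTorsionBySet A M s) (P : Submodule A M) :
    Module.IsTorsionBySet A P s := by
  rintro ⟨x, hx⟩ a
  apply Subtype.ext
  simpa using @h x a

lemma quotient_torsion {A M : Type} [CommRing A] [AddCommGroup M] [Module A M] {s : Set A}
    (h : Module.IsTorsionBySet A M s) (P : Submodule A M) :
    Module.IsTorsionBySet A (M ⧸ P) s := by
  rintro x a
  obtain ⟨y, rfl⟩ := Submodule.Quotient.mk_surjective P x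
  rw [← Submodule.Quotient.mk_smul, @h y a]
  rfl

lemma cotangent_torsion {A : Type} [CommRing A] {I : Ideal A} {s : Set A}
    (h : Module.IsTorsionBySet A I s) :
    Module.IsTorsionBySet A I.Cotangent s := by
  rintro x a
  obtain ⟨y, rfl⟩ := I.toCotangent_surjective x
  rw [← map_smul, @h y a, map_zero]

/-- The conormal module `I/I²` is killed by `I`. -/
lemma conormal_torsion {A : Type} [CommRing A] (I : Ideal A) :
    Module.IsTorsionBySet A I.Cotangent (I : Set A) := by
  rintro x ⟨a, ha⟩
  obtain ⟨y, rfl⟩ := I.toCotangent_surjective x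
  rw [← map_smul]
  refine (I.toCotangent_eq_zero _).mpr ?_
  have : ((a • y : I) : A) = a * (y : A) := rfl
  rw [this, pow_two]
  exact Ideal.mul_mem_mul ha y.2

/-- If `P` contains the `A[J]`-torsion of `M`, then `M ⧸ P` is killed by `J`;
in particular congruence modules `M/(M[𝔭] + M[I])` are killed by `𝔭`. -/
lemma quot_tors {A M : Type} [CommRing A] [AddCommGroup M] [Module A M] (J : Ideal A)
    (P : Submodule A M)
    (hP : Submodule.torsionBySet A M ((Submodule.annihilator J : Ideal A) : Set A) ≤ P) :
    Module.IsTorsionBySet A (M ⧸ P) (J : Set A) := by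
  rintro x ⟨a, ha⟩
  obtain ⟨y, rfl⟩ := Submodule.Quotient.mk_surjective P x
  rw [← Submodule.Quotient.mk_smul, Submodule.Quotient.mk_eq_zero]
  apply hP
  rw [Submodule.mem_torsionBySet_iff]
  rintro ⟨b, hb⟩
  have hba : b * a = 0 := (Submodule.mem_annihilator.mp hb) a ha
  calc b • a • y = (b * a) • y := (mul_smul b a y).symm
  _ = 0 := by rw [hba, zero_smul]

/-- A commutative ring has finite self-injective dimension if `Ext^i(-, R)`
vanishes for all large `i`.  For a noetherian local ring this is
the Gorenstein condition. -/
def HasFiniteInjectiveDimension (A : Type) [CommRing A] : Prop :=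
  ∃ n : ℕ, ∀ (M : ModuleCat A) (i : ℕ), n < i →
    Subsingleton (((Ext A (ModuleCat A) i).obj (Opposite.op M)).obj (ModuleCat.of A A))

/-- A noetherian local ring is regular if the dimension of its cotangent space
equals its Krull dimension. -/
def IsRegularLocal (R : Type) [CommRing R] [IsLocalRing R] [IsNoetherianRing R] : Prop :=
  (Module.finrank (ResidueField R) (CotangentSpace R) : WithBot ℕ∞) = ringKrullDim R

/-- A noetherian local ring is a complete intersection if its completion at the
maximal ideal is isomorphic to a regular local ring modulo an ideal generated by a
regular sequence. -/
def IsCompleteIntersectionLocal (A : Type) [CommRing A] [IsLocalRing A] : Prop :=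
  ∃ (R : Type) (_ : CommRing R) (_ : IsLocalRing R) (_ : IsNoetherianRing R) (rs : List R),
    IsRegularLocal R ∧ (∀ x ∈ rs, x ∈ maximalIdeal R) ∧
    RingTheory.Sequence.IsRegular R rs ∧
    Nonempty ((AdicCompletion (maximalIdeal A) A) ≃+* (R ⧸ Ideal.ofList rs))

/-- The ideal `Γ_{𝔪}(A)` of elements killed by a power of the maximal ideal. -/
noncomputable def powerTorsionIdeal (A : Type) [CommRing A] [IsLocalRing A] : Ideal A :=
  ⨆ n : ℕ, Submodule.torsionBySet A A ((maximalIdeal A ^ n : Ideal A) : Set A)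

end

lemma mLength_eq (R : Type) [CommRing R] (M : Type) [AddCommGroup M] [Module R M] :
    mLength R M = (Module.length R M : WithBot ℕ∞) :=
  (Module.coe_length R M).symm

/-! ### From a finite self-injective dimension to a principal socle -/

/-- The bridge between the two `Ext` groups: both are computed by `Hom(P, Y)` for a projective
resolution `P`, so vanishing of the derived-functor `Ext` in positive degree implies vanishing of
`Abelian.Ext`, for which long exact sequences are available. -/
lemma abelianExt_eq_zero_of_subsingleton {R : Type} [CommRing R] (X Y : ModuleCat R) (i : ℕ)
    (h : Subsingleton (((Ext R (ModuleCat R) (i + 1)).obj (Opposite.op X)).obj Y))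
    (e : Abelian.Ext X Y (i + 1)) : e = 0 := by
  let P := projectiveResolution X
  have hz : Limits.IsZero ((P.complex.linearYonedaObj R Y).homology (i + 1)) :=
    Limits.IsZero.of_iso (ModuleCat.isZero_of_subsingleton _)
      (P.isoExt (R := R) (i + 1) Y).symm
  rw [← HomologicalComplex.exactAt_iff_isZero_homology,
    HomologicalComplex.exactAt_iff' _ i (i + 1) (i + 2) (by simp) (by simp),
    ShortComplex.moduleCat_exact_iff] at hz
  obtain ⟨f, hf, rfl⟩ := P.extMk_surjective e (i + 2) rfl
  rw [P.extMk_eq_zero_iff f (i + 2) rfl hf i rfl]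
  obtain ⟨g, hg⟩ := hz f hf
  exact ⟨g, hg⟩

lemma shortExact_of_linear {R : Type} [CommRing R] {A B C : Type}
    [AddCommGroup A] [AddCommGroup B] [AddCommGroup C] [Module R A] [Module R B] [Module R C]
    (f : A →ₗ[R] B) (g : B →ₗ[R] C)
    (hf : Function.Injective f) (hg : Function.Surjective g) (hfg : Function.Exact f g) :
    (ShortComplex.mk (ModuleCat.ofHom f) (ModuleCat.ofHom g) (by
      ext x; exact hfg.apply_apply_eq_zero x)).ShortExact where
  exact := by
    rw [ShortComplex.ShortExact.moduleCat_exact_iff_function_exact]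
    exact hfg
  mono_f := (ModuleCat.mono_iff_injective _).mpr hf
  epi_g := (ModuleCat.epi_iff_surjective _).mpr hg

section ZeroDimensional

variable {R : Type} [CommRing R] [IsLocalRing R]

/-- The map `k → R` sending `1` to a socle element. -/
def socleMap (s : R) (hs : s ∈ Submodule.annihilator (maximalIdeal R)) :
    (R ⧸ maximalIdeal R) →ₗ[R] R :=
  (maximalIdeal R).liftQ (LinearMap.toSpanSingleton R R s) fun a ha => by
    simpa [mul_comm] using Submodule.mem_annihilator.mp hs a ha

lemma socleMap_mk (s : R) (hs : s ∈ Submodule.annihilator (maximalIdeal R)) (a : R) :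
    socleMap s hs (Submodule.Quotient.mk a) = a * s :=
  rfl

lemma socleMap_injective (s : R) (hs : s ∈ Submodule.annihilator (maximalIdeal R)) (h0 : s ≠ 0) :
    Function.Injective (socleMap s hs) := by
  rw [injective_iff_map_eq_zero]
  intro x hx
  obtain ⟨a, rfl⟩ := Submodule.Quotient.mk_surjective _ x
  rw [socleMap_mk] at hx
  rw [Submodule.Quotient.mk_eq_zero]
  by_contra ha
  have hu : IsUnit a := by simpa using ha
  exact h0 (by simpa [hu.mul_right_eq_zero] using hx)

/-- The complex `k → R → R/sR` given by a socle element `s`; it is short exact when `s ≠ 0`. -/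
def socleComplex (s : R) (hs : s ∈ Submodule.annihilator (maximalIdeal R)) :
    ShortComplex (ModuleCat R) :=
  ShortComplex.mk (ModuleCat.ofHom (socleMap s hs))
    (ModuleCat.ofHom (LinearMap.range (socleMap s hs)).mkQ)
    (ModuleCat.hom_ext (LinearMap.ext fun x =>
      (Submodule.Quotient.mk_eq_zero _).mpr (LinearMap.mem_range_self _ x)))

lemma socleComplex_shortExact (s : R) (hs : s ∈ Submodule.annihilator (maximalIdeal R))
    (h0 : s ≠ 0) : (socleComplex s hs).ShortExact :=
  shortExact_of_linear _ _ (socleMap_injective s hs h0) (Submodule.mkQ_surjective _)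
    (LinearMap.exact_map_mkQ_range _)

/-- `Ext^i(N, R) = 0` for every finitely generated `N`. -/
def ExtVanishes (R : Type) [CommRing R] (i : ℕ) : Prop :=
  ∀ (N : Type) [AddCommGroup N] [Module R N] [Module.Finite R N]
    (e : Abelian.Ext (ModuleCat.of R N) (ModuleCat.of R R) i), e = 0

variable [IsNoetherianRing R]

/-- In dimension zero `k` embeds in `R`, so `Ext^i(k, R)` embeds in `Ext^(i+1)(R/k, R)`
when `i ≥ 1`; as every finitely generated module is an iterated extension of copies of `k`,
vanishing descends from degree `i + 1` to degree `i`. -/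
lemma ExtVanishes.descend [IsArtinianRing R] (s : R)
    (hs : s ∈ Submodule.annihilator (maximalIdeal R)) (h0 : s ≠ 0) (i : ℕ)
    (h : ExtVanishes R (i + 2)) : ExtVanishes R (i + 1) := by
  have hk : ∀ e : Abelian.Ext (ModuleCat.of R (R ⧸ maximalIdeal R)) (ModuleCat.of R R) (i + 1),
      e = 0 := by
    intro e
    have hS := socleComplex_shortExact s hs h0
    obtain ⟨x, rfl⟩ := Abelian.Ext.contravariant_sequence_exact₁ hS (ModuleCat.of R R) e
      (by omega : 1 + (i + 1) = i + 2) (h (R ⧸ LinearMap.range (socleMap s hs)) _)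
    have hx : x = 0 :=
      Abelian.Ext.eq_zero_of_projective (P := ModuleCat.of R R) x
    rw [hx]
    exact Abelian.Ext.comp_zero _ _ _ _ _
  intro N _ _ hN
  induction hN using IsNoetherianRing.induction_on_isQuotientEquivQuotientPrime R with
  | subsingleton N =>
    intro e
    have := (ModuleCat.isZero_of_subsingleton (ModuleCat.of R N))
    rw [← e.mk₀_id_comp, this.eq_zero_of_src (𝟙 _), Abelian.Ext.mk₀_zero, Abelian.Ext.zero_comp]
  | quotient N p f =>
    intro e
    have hp : p.1 = maximalIdeal R := eq_maximalIdeal (Ideal.IsPrime.isMaximal' p.2)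
    let f' : N ≃ₗ[R] R ⧸ maximalIdeal R := f.trans (Submodule.quotEquivOfEq _ _ hp)
    have key := hk ((Abelian.Ext.mk₀ f'.toModuleIso.inv).comp e (zero_add _))
    have : e = (Abelian.Ext.mk₀ f'.toModuleIso.hom).comp
        ((Abelian.Ext.mk₀ f'.toModuleIso.inv).comp e (zero_add _)) (zero_add _) := by
      rw [Abelian.Ext.mk₀_comp_mk₀_assoc, Iso.hom_inv_id, Abelian.Ext.mk₀_id_comp]
    rw [this, key, Abelian.Ext.comp_zero]
  | exact N₁ N₂ N₃ f g hf hg hfg h₁ h₃ =>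
    intro e
    obtain ⟨x, rfl⟩ := Abelian.Ext.contravariant_sequence_exact₂
      (shortExact_of_linear f g hf hg hfg) (ModuleCat.of R R) e (h₁ _)
    rw [h₃ x, Abelian.Ext.comp_zero]

/-- A nonzero module over an Artinian local ring has a nonzero element killed by the maximal
ideal. -/
lemma exists_socle_element [IsArtinianRing R] (N : Type) [AddCommGroup N] [Module R N]
    [Nontrivial N] : ∃ x : N, x ≠ 0 ∧ ∀ a ∈ maximalIdeal R, a • x = 0 := by
  obtain ⟨p, hp⟩ := associatedPrimes.nonempty R N
  rw [AssociatedPrimes.mem_iff, isAssociatedPrime_iff] at hp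
  obtain ⟨hp, x, hx⟩ := hp
  have hm : p = maximalIdeal R := eq_maximalIdeal (Ideal.IsPrime.isMaximal' hp)
  refine ⟨x, ?_, fun a ha => ?_⟩
  · rintro rfl
    exact hp.ne_top (by rw [hx]; ext; simp [Submodule.mem_colon_singleton])
  · rw [← hm, hx, Submodule.mem_colon_singleton] at ha
    simpa using ha

lemma exists_mem_socle [IsArtinianRing R] :
    ∃ s : R, s ≠ 0 ∧ s ∈ Submodule.annihilator (maximalIdeal R) := by
  obtain ⟨s, h0, hs⟩ := exists_socle_element (R := R) R
  exact ⟨s, h0, Submodule.mem_annihilator.mpr fun a ha => by simpa [mul_comm] using hs a ha⟩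

/-- Every socle element of a zero-dimensional Gorenstein local ring is a multiple of any
nonzero one: since `Ext^1(R/sR, R) = 0`, the map `sR → R` sending `s` to `t` extends to `R`. -/
lemma socle_le_span [IsArtinianRing R] (hGor : HasFiniteInjectiveDimension R) (s : R)
    (hs : s ∈ Submodule.annihilator (maximalIdeal R)) (h0 : s ≠ 0) :
    Submodule.annihilator (maximalIdeal R) = Ideal.span {s} := by
  obtain ⟨n, hn⟩ := hGor
  have hE : ∀ j, ExtVanishes R (n - j + 1) := by
    intro j
    induction j with
    | zero =>
      intro N _ _ _ e
      exact abelianExt_eq_zero_of_subsingleton _ _ n (hn _ _ (Nat.lt_succ_self n)) e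
    | succ j ih =>
      rcases Nat.lt_or_ge j n with h | h
      · have := ExtVanishes.descend s hs h0 (n - (j + 1))
        rw [show n - (j + 1) + 2 = n - j + 1 by omega] at this
        exact this ih
      · rwa [show n - (j + 1) = n - j by omega]
  have h1 : ExtVanishes R 1 := by simpa using hE n
  apply le_antisymm _ ((Ideal.span_singleton_le_iff_mem _).mpr hs)
  intro t ht
  obtain ⟨x, hx⟩ := Abelian.Ext.contravariant_sequence_exact₁
    (socleComplex_shortExact s hs h0) (ModuleCat.of R R)
    (Abelian.Ext.mk₀ (ModuleCat.ofHom (socleMap t ht))) (add_zero 1)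
    (h1 (R ⧸ LinearMap.range (socleMap s hs)) _)
  obtain ⟨φ, rfl⟩ := Abelian.Ext.homEquiv₀.symm.surjective x
  have hφ : (socleComplex s hs).f ≫ φ = ModuleCat.ofHom (socleMap t ht) :=
    Abelian.Ext.homEquiv₀.symm.injective (by
      simp only [Abelian.Ext.homEquiv₀_symm_apply, Abelian.Ext.mk₀_comp_mk₀] at hx
      exact hx)
  let ψ : R →ₗ[R] R := φ.hom
  have hψ : ψ s = t := by
    have h : ψ (socleMap s hs (Submodule.Quotient.mk 1)) = socleMap t ht (Submodule.Quotient.mk 1) :=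
      LinearMap.congr_fun (congrArg ModuleCat.Hom.hom hφ) _
    rwa [socleMap_mk, socleMap_mk, one_mul, one_mul] at h
  rw [Ideal.mem_span_singleton']
  refine ⟨ψ 1, ?_⟩
  rw [← hψ, mul_comm, ← smul_eq_mul, ← map_smul, smul_eq_mul, mul_one]

/-! ### Lengths -/

/-- For `M` free with basis `b`, the map `R[𝔪]^n → R[𝔪]·M` given by `b` is injective, and each
factor on the left has length at least one. -/
lemma length_le_of_free [IsArtinianRing R] (M : Type) [AddCommGroup M] [Module R M]
    [Module.Finite R M] [Module.Free R M] :
    Module.length R M ≤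
      Module.length R ↥(Submodule.annihilator (maximalIdeal R) • (⊤ : Submodule R M)) *
        Module.length R R := by
  set J := Submodule.annihilator (maximalIdeal R)
  rw [Module.length_of_free_of_finite]
  gcongr
  let b := Module.finBasis R M
  have hJ : Nontrivial J := by
    obtain ⟨s, h0, hs⟩ := exists_mem_socle (R := R)
    exact ⟨⟨s, hs⟩, 0, fun h => h0 (congrArg Subtype.val h)⟩
  let F : (Fin (Module.finrank R M) → J) →ₗ[R] M :=
    b.equivFun.symm.toLinearMap ∘ₗ LinearMap.compLeft J.subtype _
  have hF : Function.Injective F :=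
    b.equivFun.symm.injective.comp (J.subtype_injective.comp_left)
  have hmem : ∀ v, F v ∈ J • (⊤ : Submodule R M) := by
    intro v
    simp only [F, LinearMap.comp_apply, LinearEquiv.coe_coe, Module.Basis.equivFun_symm_apply]
    exact Submodule.sum_mem _ fun i _ => Submodule.smul_mem_smul (v i).2 trivial
  refine le_trans ?_ (Module.length_le_of_injective (F.codRestrict _ hmem)
    (fun x y h => hF (congrArg Subtype.val h)))
  rw [Module.length_pi]
  simp only [ENat.card_eq_coe_fintype_card, Fintype.card_fin]
  exact ENat.self_le_mul_right _ Module.length_pos.ne'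

/-- Lift a `k`-basis of `sM` along `M → sM`: the lifts `x` define `R^r → M`. A nonzero kernel would
contain a nonzero vector killed by `𝔪`, hence of the form `s • w`; independence of the `s • x i`
forces `w` to have coordinates in `𝔪`, so `s • w = 0`. -/
lemma exists_injective_of_socle_eq_span [IsArtinianRing R] (s : R)
    (hs : Submodule.annihilator (maximalIdeal R) = Ideal.span {s})
    (M : Type) [AddCommGroup M] [Module R M] [Module.Finite R M] :
    ∃ (r : ℕ) (φ : (Fin r → R) →ₗ[R] M), Function.Injective φ ∧
      Module.length R ↥(Submodule.annihilator (maximalIdeal R) • (⊤ : Submodule R M)) = r := by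
  set S := Submodule.annihilator (maximalIdeal R) • (⊤ : Submodule R M) with hS
  have hsm : ∀ a ∈ maximalIdeal R, a * s = 0 := fun a ha => by
    have : s ∈ Submodule.annihilator (maximalIdeal R) := by
      rw [hs]; exact Ideal.mem_span_singleton_self s
    simpa [mul_comm] using Submodule.mem_annihilator.mp this a ha
  have hSmem : ∀ y ∈ S, ∃ x : M, s • x = y := by
    intro y hy
    rw [hS, hs, Submodule.ideal_span_singleton_smul] at hy
    obtain ⟨x, -, hx⟩ := Submodule.mem_smul_pointwise_iff_exists _ _ _ |>.mp hy
    exact ⟨x, hx⟩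
  have htors : Module.IsTorsionBySet R S (maximalIdeal R : Set R) := by
    rintro ⟨y, hy⟩ ⟨a, ha⟩
    obtain ⟨x, rfl⟩ := hSmem y hy
    apply Subtype.ext
    change a • s • x = 0
    rw [smul_smul, hsm a ha, zero_smul]
  let _ : Module (R ⧸ maximalIdeal R) S := htors.module
  have : IsScalarTower R (R ⧸ maximalIdeal R) S := htors.isScalarTower
  let _ : Field (R ⧸ maximalIdeal R) := Ideal.Quotient.field _
  have : Module.Finite (R ⧸ maximalIdeal R) S := Module.Finite.of_restrictScalars_finite R _ _
  let b := Module.finBasis (R ⧸ maximalIdeal R) S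
  choose x hx using fun i => hSmem (b i) (b i).2
  refine ⟨Module.finrank (R ⧸ maximalIdeal R) S, Fintype.linearCombination R x, ?_, ?_⟩
  · rw [← LinearMap.ker_eq_bot]
    by_contra hker
    have : Nontrivial (LinearMap.ker (Fintype.linearCombination R x)) :=
      Submodule.nontrivial_iff_ne_bot.mpr hker
    obtain ⟨⟨v, hv⟩, hv0, hvm⟩ := exists_socle_element (R := R)
      (LinearMap.ker (Fintype.linearCombination R x))
    have hvs : ∀ i, ∃ w, w * s = v i := by
      intro i
      rw [← Ideal.mem_span_singleton', ← hs, Submodule.mem_annihilator]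
      intro a ha
      have := congrFun (congrArg Subtype.val (hvm a ha)) i
      simpa [mul_comm] using this
    choose w hw using hvs
    have hsum : ∑ i, (Ideal.Quotient.mk (maximalIdeal R) (w i)) • b i = 0 := by
      apply Subtype.ext
      have h1 : ∀ i, (((Ideal.Quotient.mk (maximalIdeal R) (w i)) • b i : S) : M) = v i • x i := by
        intro i
        have h2 : (Ideal.Quotient.mk (maximalIdeal R) (w i)) • b i = w i • b i := by
          rw [← Ideal.Quotient.algebraMap_eq, algebraMap_smul]
        rw [h2, Submodule.coe_smul, ← hx i, smul_smul, hw]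
      rw [Submodule.coe_sum, Finset.sum_congr rfl fun i _ => h1 i]
      simpa [Fintype.linearCombination_apply] using hv
    apply hv0
    apply Subtype.ext
    funext i
    have h0 := Fintype.linearIndependent_iff.mp b.linearIndependent _ hsum i
    rw [Ideal.Quotient.eq_zero_iff_mem] at h0
    change v i = 0
    rw [← hw, hsm _ h0]
  · rw [Module.length_eq_of_surjective (R := R ⧸ maximalIdeal R) (S := R)
      Ideal.Quotient.mk_surjective]
    exact Module.length_eq_finrank _ _

end ZeroDimensional

/-- Let `R` be a Gorenstein local ring (a noetherian local ring of
finite self-injective dimension) of Krull dimension zero with maximal ideal `𝔪`, and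
`M` a finitely generated `R`-module.  Then `M` is free if and only if
`ℓ_R(M) ≤ ℓ_R(R[𝔪]·M) · ℓ_R(R)`. -/
theorem statement10
    (R : Type) [CommRing R] [IsLocalRing R] [IsNoetherianRing R]
    (hGor : HasFiniteInjectiveDimension R) (hdim : ringKrullDim R = 0)
    (M : Type) [AddCommGroup M] [Module R M] [Module.Finite R M] :
    Module.Free R M ↔
      mLength R M ≤
        mLength R ↥(Submodule.annihilator (maximalIdeal R) • (⊤ : Submodule R M)) *
          mLength R R := by
  have : Ring.KrullDimLE 0 R := by
    rw [Ring.krullDimLE_iff, hdim]; rfl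
  have : IsArtinianRing R := isArtinianRing_iff_krullDimLE_zero.mpr inferInstance
  simp only [mLength_eq, ← WithBot.coe_mul, WithBot.coe_le_coe]
  refine ⟨fun _ => length_le_of_free M, fun hle => ?_⟩
  obtain ⟨s, h0, hs⟩ := exists_mem_socle (R := R)
  obtain ⟨r, φ, hφ, hr⟩ := exists_injective_of_socle_eq_span s (socle_le_span hGor s hs h0) M
  have hrange : LinearMap.range φ = ⊤ := by
    by_contra hne
    have hlt := Submodule.length_lt hne
    rw [← (LinearEquiv.ofInjective φ hφ).length_eq, Module.length_pi,
      ENat.card_eq_coe_fintype_card, Fintype.card_fin, ← hr] at hlt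
    exact absurd hle (not_le.mpr hlt)
  exact Module.Free.of_equiv (LinearEquiv.ofBijective φ ⟨hφ, LinearMap.range_eq_top.mp hrange⟩)
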